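/- For every integer m ≥ 3, the polynomial f_m(X) divides X^{2^{m+2}-1} + 1 in F_2[X]. -/

import Mathlib

open Polynomial

/-- `fibSet m` is the set of fibbinary integers below `2^m`: integers in `{0,…,2^m-1}`
whose binary representation has no two consecutive ones. -/
noncomputable def fibSet (m : ℕ) : Finset ℕ :=
  @Finset.filter _ (fun i => ∀ j : ℕ, ¬(i.testBit j ∧ i.testBit (j + 1)))
    (Classical.decPred _) (Finset.range (2 ^ m))

/-- The `m`-th fibbinary polynomial over `F_2`. -/
noncomputable def fibPoly (m : ℕ) : Polynomial (ZMod 2) :=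
  ∑ i ∈ fibSet m, X ^ i

def IsFibb (i : ℕ) : Prop := ∀ j : ℕ, ¬(i.testBit j ∧ i.testBit (j + 1))

lemma mem_fibSet (m i : ℕ) : i ∈ fibSet m ↔ i < 2 ^ m ∧ IsFibb i := by
  unfold fibSet IsFibb
  simp only [Finset.mem_filter, Finset.mem_range]

lemma isFibb_two_mul (k : ℕ) : IsFibb (2 * k) ↔ IsFibb k := by
  constructor
  · intro h j
    have := h (j + 1)
    simpa [Nat.testBit_succ] using this
  · intro h j
    cases j with
    | zero => simp
    | succ j => simpa [Nat.testBit_succ] using h j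

lemma isFibb_odd (k : ℕ) : IsFibb (2 * k + 1) ↔ (k % 2 = 0 ∧ IsFibb k) := by
  have e : (2 * k + 1) / 2 = k := by omega
  constructor
  · intro h
    refine ⟨?_, fun j => ?_⟩
    · have := h 0
      simp [Nat.testBit_succ, e, Nat.testBit_zero] at this
      exact this
    · have := h (j + 1)
      simpa only [Nat.testBit_succ, e] using this
  · rintro ⟨h0, h⟩ j
    cases j with
    | zero => simp [Nat.testBit_succ, e, Nat.testBit_zero, h0]
    | succ j => simpa only [Nat.testBit_succ, e] using h j

lemma fibSet_succ (m : ℕ) : fibSet (m + 2) =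
    (fibSet (m + 1)).image (fun k => k * 2) ∪ (fibSet m).image (fun k => k * 4 + 1) := by
  ext i
  simp only [Finset.mem_union, Finset.mem_image, mem_fibSet]
  constructor
  · rintro ⟨h1, h2⟩
    rcases Nat.even_or_odd' i with ⟨k, rfl | rfl⟩
    · left
      exact ⟨k, ⟨by rw [pow_succ] at h1; omega, (isFibb_two_mul k).1 h2⟩, by ring⟩
    · right
      obtain ⟨h0, h3⟩ := (isFibb_odd k).1 h2
      obtain ⟨l, rfl⟩ : ∃ l, k = 2 * l := ⟨k / 2, by omega⟩
      exact ⟨l, ⟨by rw [pow_add] at h1; omega, (isFibb_two_mul l).1 h3⟩, by ring⟩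
  · rintro (⟨k, ⟨h1, h2⟩, rfl⟩ | ⟨k, ⟨h1, h2⟩, rfl⟩)
    · refine ⟨by rw [pow_succ]; omega, ?_⟩
      rw [mul_comm]; exact (isFibb_two_mul k).2 h2
    · refine ⟨by rw [pow_add]; omega, ?_⟩
      have : k * 4 + 1 = 2 * (2 * k) + 1 := by ring
      rw [this]
      exact (isFibb_odd _).2 ⟨by omega, (isFibb_two_mul k).2 h2⟩

lemma fib_bot (m : ℕ) : fibPoly (m + 2) = fibPoly (m + 1) ^ 2 + X * fibPoly m ^ 4 := by
  have h4 : fibPoly m ^ 4 = (fibPoly m ^ 2) ^ 2 := by ring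
  rw [h4]
  unfold fibPoly
  rw [fibSet_succ, Finset.sum_union, Finset.sum_image, Finset.sum_image, sum_pow_char 2,
    sum_pow_char 2, sum_pow_char 2, Finset.mul_sum]
  · congr 1
    · exact Finset.sum_congr rfl fun i _ => by ring
    · exact Finset.sum_congr rfl fun i _ => by ring
  · intro a _ b _ h; simp only at h; omega
  · intro a _ b _ h; simp only at h; omega
  · rw [Finset.disjoint_left]
    intro a ha hb
    simp only [Finset.mem_image] at ha hb
    obtain ⟨b, _, rfl⟩ := ha
    obtain ⟨c, _, h⟩ := hb
    omega

lemma fib_zero : fibPoly 0 = 1 := by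
  have : fibSet 0 = {0} := by
    ext i
    rw [mem_fibSet]
    simp only [pow_zero, Nat.lt_one_iff, Finset.mem_singleton]
    exact ⟨fun h => h.1, fun h => ⟨h, by subst h; intro j; simp⟩⟩
  simp [fibPoly, this]

lemma fib_one : fibPoly 1 = 1 + X := by
  have : fibSet 1 = {0, 1} := by
    ext i
    rw [mem_fibSet]
    simp only [pow_one, Finset.mem_insert, Finset.mem_singleton]
    refine ⟨fun h => by omega, fun h => ⟨by omega, ?_⟩⟩
    intro j
    rcases h with rfl | rfl <;> simp [Nat.testBit_succ]
  simp [fibPoly, this]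

lemma two_z : (2 : Polynomial (ZMod 2)) = 0 := CharTwo.two_eq_zero

lemma fib_top : ∀ m : ℕ, fibPoly (m + 2) = fibPoly (m + 1) + X ^ (2 ^ (m + 1)) * fibPoly m
  | 0 => by
    rw [fib_bot, fib_one, fib_zero]
    linear_combination X * two_z
  | 1 => by
    rw [fib_bot 1, fib_bot 0, fib_one, fib_zero]
    linear_combination (X ^ 2 * 7 + X ^ 3 * 6 + 2 * X ^ 4 + 2 * X) * two_z
  | m + 2 => by
    have h1 := fib_top (m + 1)
    have h2 := fib_top m
    have b1 := fib_bot (m + 2)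
    have b2 := fib_bot (m + 1)
    have b3 := fib_bot m
    have e1 : (X : Polynomial (ZMod 2)) ^ (2 ^ (m + 2 + 1)) = (X ^ (2 ^ (m + 1))) ^ 4 := by
      rw [← pow_mul]; congr 1; ring
    have e2 : (X : Polynomial (ZMod 2)) ^ (2 ^ (m + 1 + 1)) = (X ^ (2 ^ (m + 1))) ^ 2 := by
      rw [← pow_mul]; congr 1
    rw [e1]
    rw [e2] at h1
    have s1 : fibPoly (m + 3) ^ 2 =
        fibPoly (m + 2) ^ 2 + (X ^ (2 ^ (m + 1))) ^ 4 * fibPoly (m + 1) ^ 2 := by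
      rw [show m + 3 = m + 1 + 2 from rfl, h1, CharTwo.add_sq]; ring
    have s2 : fibPoly (m + 2) ^ 4 =
        fibPoly (m + 1) ^ 4 + (X ^ (2 ^ (m + 1))) ^ 4 * fibPoly m ^ 4 := by
      rw [h2, show 4 = 2 * 2 from rfl, pow_mul, CharTwo.add_sq, CharTwo.add_sq]; ring
    linear_combination b1 - b2 + s1 + X * s2 - (X ^ (2 ^ (m + 1))) ^ 4 * b3

lemma fib_cop_X : ∀ m : ℕ, IsCoprime X (fibPoly m)
  | 0 => by rw [fib_zero]; exact isCoprime_one_right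
  | 1 => by rw [fib_one]; exact ⟨-1, 1, by ring⟩
  | m + 2 => by
    rw [fib_bot]
    exact (IsCoprime.pow_right (fib_cop_X (m + 1))).add_mul_left_right _

lemma fib_cop : ∀ m : ℕ, IsCoprime (fibPoly m) (fibPoly (m + 1))
  | 0 => by rw [fib_zero]; exact isCoprime_one_left
  | m + 1 => by
    have : IsCoprime (fibPoly (m + 1)) (X ^ (2 ^ (m + 1)) * fibPoly m) :=
      IsCoprime.mul_right (fib_cop_X _).symm.pow_right (fib_cop m).symm
    have h := this.add_mul_left_right 1
    rw [mul_one, add_comm (_ * _), ← fib_top m] at h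
    exact h

theorem fibPoly_dvd (m : ℕ) (hm : 3 ≤ m) :
    fibPoly m ∣ (X ^ (2 ^ (m + 2) - 1) + 1 : Polynomial (ZMod 2)) := by
  obtain ⟨n, rfl⟩ : ∃ n, m = n + 1 := ⟨m - 1, by omega⟩
  have t1 := fib_top n
  have t2 := fib_top (n + 1)
  have b1 := fib_bot n
  have b2 := fib_bot (n + 1)
  have hc := fib_cop (n + 1)
  have e : (X : Polynomial (ZMod 2)) * X ^ (2 ^ (n + 1 + 2) - 1) = (X ^ (2 ^ (n + 1))) ^ 4 := by
    rw [← pow_succ', ← pow_mul, Nat.sub_add_cancel Nat.one_le_two_pow]; congr 1; ring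
  have hz := two_z
  simp only [add_assoc, Nat.reduceAdd] at *
  generalize (X : Polynomial (ZMod 2)) ^ (2 ^ (n + 3) - 1) = Y at *
  generalize (X : Polynomial (ZMod 2)) ^ (2 ^ (n + 1)) = Q at *
  generalize (X : Polynomial (ZMod 2)) ^ (2 ^ (n + 2)) = Q2 at *
  generalize fibPoly n = g at *
  generalize fibPoly (n + 1) = f at *
  generalize fibPoly (n + 2) = h at *
  have d1 : f ∣ h - 1 := by
    refine hc.dvd_of_dvd_mul_left (?_ : f ∣ h * (h - 1))
    exact ⟨Q2 - X * f ^ 3, by linear_combination t2 - b2⟩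
  let I := Ideal.span {f}
  let φ := Ideal.Quotient.mk I
  have key : ∀ a, f ∣ a ↔ φ a = 0 := fun a => by
    rw [Ideal.Quotient.eq_zero_iff_mem, Ideal.mem_span_singleton]
  have hf : φ f = 0 := (key f).1 dvd_rfl
  rw [key] at d1 ⊢
  have u1 := congrArg φ t1
  have u2 := congrArg φ b1
  have u3 := congrArg φ e
  have u4 := congrArg φ hz
  simp only [map_add, map_sub, map_mul, map_pow, map_one, map_zero, map_ofNat, hf] at *
  have w : φ h = 1 := by linear_combination d1
  rw [w] at u1 u2
  have w1 : φ X * φ g ^ 4 = 1 := by linear_combination -u2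
  have w2 : φ Q ^ 4 * φ g ^ 4 = 1 := by
    rw [← mul_pow, show φ Q * φ g = 1 by linear_combination -u1, one_pow]
  linear_combination (-φ Y) * w1 + w2 + φ g ^ 4 * u3 + u4
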